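/- Let k be an algebraically closed field of characteristic 0, N ≥ 5, and let λ = (λ₁ ≥ … ≥ λ_p ≥ 1) be a partition of N with λ₁ ≥ 3 and j := N − p satisfying 2j < N. Then the Zariski closure in Mat_N(k) of the set {x + y : x, y ∈ O_λ} equals {M ∈ Mat_N(k) : Tr(M) = 0 and rank(M) ≤ 2j}; that is, the conical secant variety of O_λ is the determinantal variety D°_{2j}(N) of trace-zero matrices of rank at most 2j. -/

import Mathlib

open Matrix

noncomputable section

/-- The Zariski closure of a set of `N × N` matrices. -/
def zClosure {k : Type*} [CommRing k] {N : ℕ}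
    (S : Set (Matrix (Fin N) (Fin N) k)) : Set (Matrix (Fin N) (Fin N) k) :=
  {M | ∀ P : MvPolynomial (Fin N × Fin N) k,
      (∀ x ∈ S, MvPolynomial.eval (fun q => x q.1 q.2) P = 0) →
      MvPolynomial.eval (fun q => M q.1 q.2) P = 0}

/-- The set of nilpotent matrices of Jordan type `lam`. -/
def jordanOrbit (k : Type*) [Field k] (N : ℕ) {p : ℕ} (lam : Fin p → ℕ) :
    Set (Matrix (Fin N) (Fin N) k) :=
  {M | ∀ i : ℕ, 1 ≤ i → (M ^ i).rank = ∑ l, (lam l - i)}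

/-! Trace and rank bounds are closed conditions, so the point is to reach a trace-zero matrix of
rank at most `2j`. Factor it as `U * V` through `k ^ (2j)`, with `U` injective; then `W = V * U` has
trace zero. For generic such `W`, the vectors `v, W²v, W⁴v, …` followed by `Wv, W³v, …` form a
basis, in which `W` becomes `[[0, A], [1, C]]` with `C` supported on its last column and its last
entry equal to `tr W = 0`. Hence `C` is a nilpotent matrix of rank one, and it is conjugate to a sum
`X + Y` of two nilpotent matrices with Jordan blocks of sizes `λ_l - 1`. This makes `W` conjugate to
`[[X, E], [1, Y]]`. After a change of basis of `k ^ (2j)` we get `U * V = U₁ * V₁ + U₂ * V₂` with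
`V₁ * U₁ = X` and `V₂ * U₂ = Y`, and both summands lie in `O_λ`, because
`rank (U V) ^ (i + 1) = rank (V U) ^ i` whenever `U` is injective and `V` is surjective.
Special matrices are limits along a line `V + t (D L - V)`, where `L * U = 1` and `D` is generic of
trace zero. -/

section Rank

variable {k l m n o : Type*} [Field k] [Fintype m] [Fintype n] [Fintype o]

theorem rank_add_le_rank_add_rank (A B : Matrix l m k) : (A + B).rank ≤ A.rank + B.rank := by
  rw [rank, mulVecLin_add]
  exact (Submodule.finrank_mono (LinearMap.range_add_le _ _)).trans
    (Submodule.finrank_add_le_finrank_add_finrank _ _)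

theorem rank_mul_mul_of_leftInverse_of_rightInverse [Fintype l] [DecidableEq m] [DecidableEq n]
    {L : Matrix m l k} {U : Matrix l m k} {V : Matrix n o k} {R : Matrix o n k}
    (hL : L * U = 1) (hR : V * R = 1) (Z : Matrix m n k) : (U * Z * V).rank = Z.rank := by
  apply le_antisymm
  · exact (rank_mul_le_left _ _).trans (rank_mul_le_right _ _)
  · calc Z.rank = (L * (U * Z * V) * R).rank := by
          rw [← Matrix.mul_assoc, ← Matrix.mul_assoc, hL, Matrix.one_mul, Matrix.mul_assoc, hR,
            Matrix.mul_one]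
      _ ≤ (U * Z * V).rank := (rank_mul_le_left _ _).trans (rank_mul_le_right _ _)

theorem exists_mul_mul_eq_one_of_rank (M : Matrix n n k) :
    ∃ (A : Matrix (Fin M.rank) n k) (B : Matrix n (Fin M.rank) k), A * M * B = 1 := by
  classical
  obtain ⟨A, B, e, -, -, hE⟩ := exists_rank_normal_form M
  refine ⟨A.submatrix (e.symm ∘ Sum.inl) id, B.submatrix id (e.symm ∘ Sum.inl), ?_⟩
  calc A.submatrix (e.symm ∘ Sum.inl) id * M * B.submatrix id (e.symm ∘ Sum.inl)
      = (A * M * B).submatrix (e.symm ∘ Sum.inl) (e.symm ∘ Sum.inl) := rfl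
    _ = 1 := by
      rw [hE]
      ext i t
      simp [one_apply]

theorem exists_isUnit_mul_row_eq_zero [DecidableEq n] (M : Matrix n n k) :
    ∃ (A : Matrix n n k) (T : Finset n), IsUnit A ∧ T.card ≤ M.rank ∧
      ∀ s ∉ T, ∀ t, (A * M) s t = 0 := by
  obtain ⟨A, B, e, hA, hB, hE⟩ := exists_rank_normal_form M
  refine ⟨A, Finset.univ.image (e.symm ∘ Sum.inl), hA,
    Finset.card_image_le.trans (by simp), fun s hs t => ?_⟩
  have hAM : A * M = (fromBlocks 1 0 0 0).submatrix e e * B⁻¹ := by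
    rw [← hE, mul_nonsing_inv_cancel_right _ _ ((isUnit_iff_isUnit_det B).1 hB)]
  rcases hx : e s with x | x
  · exact absurd (Finset.mem_image.2 ⟨x, Finset.mem_univ _, by simp [← hx]⟩) hs
  · rw [hAM, mul_apply]
    refine Finset.sum_eq_zero fun u _ => ?_
    rcases hu : e u with y | y <;> simp [hx, hu]

theorem exists_leftInverse_mul_eq_of_rank_le [DecidableEq m] (M : Matrix n n k)
    (hM : M.rank ≤ Fintype.card m) (hm : Fintype.card m ≤ Fintype.card n) :
    ∃ (L : Matrix m n k) (U : Matrix n m k) (V : Matrix m n k), L * U = 1 ∧ U * V = M := by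
  classical
  obtain ⟨A, T, hA, hT, hrow⟩ := exists_isUnit_mul_row_eq_zero M
  rw [isUnit_iff_isUnit_det] at hA
  obtain ⟨T', hTT', -, hT'⟩ :=
    Finset.exists_subsuperset_card_eq (Finset.subset_univ T) (hT.trans hM) hm
  let e : m ≃ T' := Fintype.equivOfCardEq (by simp [hT'])
  let f : m → n := fun i => e i
  have hf : Function.Injective f := Subtype.val_injective.comp e.injective
  have hfT : ∀ s ∉ Set.range f, s ∉ T := fun s hs hsT => hs ⟨e.symm ⟨s, hTT' hsT⟩, by simp [f]⟩
  refine ⟨A.submatrix f id, A⁻¹.submatrix id f, (A * M).submatrix f id, ?_, ?_⟩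
  · rw [← submatrix_mul _ _ _ _ _ Function.bijective_id, mul_nonsing_inv _ hA, submatrix_one _ hf]
  · conv_rhs => rw [← nonsing_inv_mul_cancel_left A M hA]
    ext s t
    rw [mul_apply, mul_apply]
    exact Fintype.sum_of_injective f hf _ _
      (fun u hu => by rw [hrow u (hfT u hu), mul_zero]) fun _ => rfl

end Rank

section ZariskiClosure

variable {k : Type*} [CommRing k] {N : ℕ} {S : Set (Matrix (Fin N) (Fin N) k)}
  {M : Matrix (Fin N) (Fin N) k}

theorem trace_eq_zero_of_mem_zClosure (hS : ∀ x ∈ S, x.trace = 0) (hM : M ∈ zClosure S) :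
    M.trace = 0 := by
  have heval : ∀ x : Matrix (Fin N) (Fin N) k,
      MvPolynomial.eval (fun q => x q.1 q.2) (mvPolynomialX (Fin N) (Fin N) k).trace = x.trace := by
    simp [trace]
  rw [← heval]
  exact hM _ fun x hx => (heval x).trans (hS x hx)

open Polynomial in
theorem map_eval_map_C_add_X_smul {m n : Type*} (A B : Matrix m n k) (t : k) :
    (A.map C + (X : k[X]) • B.map C).map (eval t) = A + t • B := by
  ext
  simp [mul_comm t]

open Polynomial in
theorem map_eval_mem_zClosure [IsDomain k] [Infinite k] {F : Matrix (Fin N) (Fin N) k[X]} {q : k[X]}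
    (hq : q ≠ 0) (hF : ∀ t, q.eval t ≠ 0 → F.map (eval t) ∈ S) (t₀ : k) :
    F.map (eval t₀) ∈ zClosure S := by
  intro P hP
  let G : k[X] := MvPolynomial.aeval (fun s : Fin N × Fin N => F s.1 s.2) P
  have hG : ∀ t, G.eval t = MvPolynomial.eval (fun s => F.map (eval t) s.1 s.2) P := by
    intro t
    rw [← coe_aeval_eq_eval]
    exact MvPolynomial.comp_aeval_apply _ (Polynomial.aeval t) P
  have hGq : G * q = 0 := by
    refine funext fun t => ?_
    rw [eval_mul, eval_zero, mul_eq_zero, or_iff_not_imp_right]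
    exact fun ht => (hG t).trans (hP _ (hF t ht))
  rw [← hG, (mul_eq_zero.1 hGq).resolve_right hq, eval_zero]

theorem eval_det_map_C_mul_mvPolynomialX_mul_map_C {m n : Type*} [Fintype m] [DecidableEq m]
    [Fintype n] (A : Matrix m n k) (B : Matrix n m k) (x : Matrix n n k) :
    MvPolynomial.eval (fun q : n × n => x q.1 q.2)
      (det (Matrix.map A (MvPolynomial.C (σ := n × n)) * mvPolynomialX n n k
        * Matrix.map B (MvPolynomial.C (σ := n × n)))) = (A * x * B).det := by
  rw [RingHom.map_det]
  congr 1
  ext i t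
  simp [mul_apply]

theorem rank_le_of_mem_zClosure {k : Type*} [Field k] {S : Set (Matrix (Fin N) (Fin N) k)}
    {M : Matrix (Fin N) (Fin N) k} {r : ℕ} (hS : ∀ x ∈ S, x.rank ≤ r) (hM : M ∈ zClosure S) :
    M.rank ≤ r := by
  obtain ⟨A, B, hAB⟩ := exists_mul_mul_eq_one_of_rank M
  by_contra! hlt
  have hminor : ∀ x ∈ S, (A * x * B).det = 0 := by
    intro x hx
    by_contra hdet
    have hle : (A * x * B).rank ≤ x.rank := (rank_mul_le_left _ _).trans (rank_mul_le_right _ _)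
    rw [rank_of_det_ne_zero hdet, Fintype.card_fin] at hle
    exact absurd (hle.trans (hS x hx)) hlt.not_ge
  have hzero := hM _ fun x hx =>
    (eval_det_map_C_mul_mvPolynomialX_mul_map_C A B x).trans (hminor x hx)
  rw [eval_det_map_C_mul_mvPolynomialX_mul_map_C, hAB, det_one] at hzero
  exact one_ne_zero hzero

end ZariskiClosure

/-- `X` is nilpotent with Jordan blocks of sizes `nu l` (a part equal to `0` is an empty block).
The case `i = 0` says that `X` has size `∑ l, nu l`. -/
def HasJordanType {k n ι : Type*} [Field k] [Fintype n] [DecidableEq n] [Fintype ι] (nu : ι → ℕ)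
    (X : Matrix n n k) : Prop :=
  ∀ i : ℕ, (X ^ i).rank = ∑ l, (nu l - i)

section JordanType

variable {k m n ι : Type*} [Field k] [Fintype m] [DecidableEq m] [Fintype n] [DecidableEq n]
  [Fintype ι] {nu : ι → ℕ}

theorem rank_eq_of_isConj {X Y : Matrix n n k} (h : IsConj X Y) : X.rank = Y.rank := by
  obtain ⟨c, hc⟩ := h
  have hdet := (isUnit_iff_isUnit_det _).1 c.isUnit
  rw [← rank_mul_eq_right_of_isUnit_det _ X hdet, hc.eq, rank_mul_eq_left_of_isUnit_det _ Y hdet]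

theorem HasJordanType.of_isConj {X Y : Matrix n n k} (hX : HasJordanType nu X) (h : IsConj X Y) :
    HasJordanType nu Y :=
  fun i => (rank_eq_of_isConj (h.pow i)).symm.trans (hX i)

theorem HasJordanType.reindex {X : Matrix m m k} (hX : HasJordanType nu X) (e : m ≃ n) :
    HasJordanType nu (Matrix.reindex e e X) := by
  intro i
  rw [← hX i, ← rank_reindex e e (X ^ i)]
  exact congrArg rank (map_pow (reindexAlgEquiv k k e) X i).symm

variable {N p : ℕ} {lam : Fin p → ℕ}

theorem mul_mem_jordanOrbit {U : Matrix (Fin N) m k} {V : Matrix m (Fin N) k}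
    {L : Matrix m (Fin N) k} {R : Matrix (Fin N) m k} (hL : L * U = 1) (hR : V * R = 1)
    (h : HasJordanType (fun l => lam l - 1) (V * U)) : U * V ∈ jordanOrbit k N lam := by
  have hpow : ∀ i, (U * V) ^ (i + 1) = U * (V * U) ^ i * V := by
    intro i
    induction i with
    | zero => simp
    | succ i ih => rw [pow_succ, ih, pow_succ]; simp only [Matrix.mul_assoc]
  intro i hi
  obtain ⟨i, rfl⟩ := Nat.exists_eq_add_of_le' hi
  rw [hpow, rank_mul_mul_of_leftInverse_of_rightInverse hL hR, h]
  exact Finset.sum_congr rfl fun l _ => by dsimp only; omega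

theorem trace_eq_zero_of_mem_jordanOrbit {x : Matrix (Fin N) (Fin N) k}
    (hx : x ∈ jordanOrbit k N lam) : x.trace = 0 := by
  have hrank : (x ^ (∑ l, lam l + 1)).rank = 0 := by
    rw [hx _ (Nat.le_add_left _ _), Finset.sum_eq_zero_iff]
    intro l hl
    have := Finset.single_le_sum_of_canonicallyOrdered (f := lam) hl
    omega
  have hnil : IsNilpotent x := by
    rw [rank, Submodule.finrank_eq_zero, LinearMap.range_eq_bot] at hrank
    exact ⟨_, toLin'.map_eq_zero_iff.1 hrank⟩
  exact (isNilpotent_trace_of_isNilpotent hnil).eq_zero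

end JordanType

/-- The direct sum of the upper triangular nilpotent Jordan blocks of sizes `nu l`. -/
def jordanShift (k : Type*) [Field k] {ι : Type*} [DecidableEq ι] (nu : ι → ℕ) :
    Matrix (Σ l, Fin (nu l)) (Σ l, Fin (nu l)) k :=
  of fun s => if h : s.2 + 1 < nu s.1 then Pi.single ⟨s.1, ⟨s.2 + 1, h⟩⟩ 1 else 0

section JordanShift

variable {k ι : Type*} [Field k] [Fintype ι] [DecidableEq ι] {nu : ι → ℕ}

theorem jordanShift_mulVec (v : (Σ l, Fin (nu l)) → k) (s : Σ l, Fin (nu l)) :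
    (jordanShift k nu *ᵥ v) s = if h : s.2 + 1 < nu s.1 then v ⟨s.1, ⟨s.2 + 1, h⟩⟩ else 0 := by
  by_cases h : s.2 + 1 < nu s.1 <;> simp [mulVec, jordanShift, h]

theorem jordanShift_pow_mulVec (i : ℕ) (v : (Σ l, Fin (nu l)) → k) (s : Σ l, Fin (nu l)) :
    (jordanShift k nu ^ i *ᵥ v) s =
      if h : s.2 + i < nu s.1 then v ⟨s.1, ⟨s.2 + i, h⟩⟩ else 0 := by
  induction i generalizing s with
  | zero => simp
  | succ i ih =>
    rw [pow_succ', ← mulVec_mulVec, jordanShift_mulVec]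
    simp only [ih]
    split_ifs <;> first | omega | simp [add_right_comm, add_assoc]

theorem hasJordanType_jordanShift : HasJordanType nu (jordanShift k nu) := by
  intro i
  let src : (Σ l, Fin (nu l - i)) → Σ l, Fin (nu l) :=
    Sigma.map id fun _ => Fin.castLE (Nat.sub_le _ _)
  let tgt : (Σ l, Fin (nu l - i)) → Σ l, Fin (nu l) :=
    fun x => ⟨x.1, ⟨x.2 + i, by omega⟩⟩
  have hsrc : Function.Injective src :=
    Function.injective_id.sigma_map fun _ => Fin.castLE_injective _
  have htgt : Function.Injective tgt := by
    rintro ⟨l, a⟩ ⟨l', b⟩ h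
    obtain rfl : l = l' := congrArg Sigma.fst h
    simpa [tgt, Fin.ext_iff] using h
  have hmul : (jordanShift k nu ^ i).mulVecLin =
      Function.ExtendByZero.linearMap k src ∘ₗ LinearMap.funLeft k k tgt := by
    refine LinearMap.ext fun v => funext fun s => ?_
    rw [mulVecLin_apply, jordanShift_pow_mulVec]
    change _ = Function.extend src (v ∘ tgt) 0 s
    split_ifs with h
    · exact (hsrc.extend_apply (v ∘ tgt) 0 ⟨s.1, ⟨s.2, by omega⟩⟩).symm
    · refine (Function.extend_apply' (f := src) (v ∘ tgt) 0 s ?_).symm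
      rintro ⟨x, rfl⟩
      exact h (Nat.add_lt_of_lt_sub x.2.2)
  rw [rank, hmul, LinearMap.range_comp_of_range_eq_top _
    (LinearMap.range_eq_top.2 (LinearMap.funLeft_surjective_of_injective _ _ _ htgt)),
    LinearMap.finrank_range_of_inj (Function.extend_injective hsrc fun _ => 0)]
  simp

end JordanShift

section SumOfTwoNilpotents

variable {k n ι : Type*} [Field k] [Fintype n] [DecidableEq n] [Fintype ι] {nu : ι → ℕ}

theorem isConj_jordanShift_single_sub [DecidableEq ι] {l : ι} (hl : 1 < nu l) {a : k}
    (ha : a ≠ 1) :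
    IsConj (jordanShift k nu)
      (single ⟨l, ⟨0, one_pos.trans hl⟩⟩ ⟨l, ⟨1, hl⟩⟩ a - jordanShift k nu) := by
  let s₀ : Σ l, Fin (nu l) := ⟨l, ⟨0, one_pos.trans hl⟩⟩
  -- Alternating signs conjugate `J` to `-J`; the modified first sign scales one row to `a - 1`.
  let d : (Σ l, Fin (nu l)) → k := Function.update (fun s => (-1) ^ (s.2 : ℕ)) s₀ (1 - a)
  have hd₀ : d s₀ = 1 - a := Function.update_self ..
  have hd : ∀ s ≠ s₀, d s = (-1) ^ (s.2 : ℕ) := fun s hs => Function.update_of_ne hs ..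
  have hunit : IsUnit (diagonal d) := by
    refine isUnit_diagonal.2 (Pi.isUnit_iff.2 fun s => isUnit_iff_ne_zero.2 ?_)
    obtain rfl | hs := eq_or_ne s s₀
    · exact hd₀ ▸ sub_ne_zero.2 ha.symm
    · exact hd s hs ▸ pow_ne_zero _ (neg_ne_zero.2 one_ne_zero)
  refine ⟨hunit.unit, ?_⟩
  ext s t
  rw [IsUnit.unit_spec, diagonal_mul, mul_diagonal, Matrix.sub_apply, sub_mul]
  by_cases hst : ∃ h : s.2 + 1 < nu s.1, t = ⟨s.1, ⟨s.2 + 1, h⟩⟩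
  · obtain ⟨h, rfl⟩ := hst
    have hsucc : d ⟨s.1, ⟨s.2 + 1, h⟩⟩ = -(-1) ^ (s.2 : ℕ) := by
      rw [hd _ fun h => Nat.succ_ne_zero s.2 (congrArg (fun t => (t.2 : ℕ)) h), pow_succ,
        mul_neg_one]
    have hJ : jordanShift k nu s ⟨s.1, ⟨s.2 + 1, h⟩⟩ = 1 := by simp [jordanShift, h]
    obtain rfl | hs := eq_or_ne s s₀
    · rw [hd₀, hsucc, hJ]
      simp [s₀, sub_eq_add_neg, add_comm]
    · rw [hd s hs, hsucc, hJ, single_apply_of_row_ne hs.symm]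
      simp
  · have hJ : jordanShift k nu s t = 0 := by
      by_cases h : s.2 + 1 < nu s.1
      · simpa [jordanShift, h, Pi.single_apply] using fun ht => hst ⟨h, ht⟩
      · simp [jordanShift, h]
    have hE : single s₀ ⟨l, ⟨1, hl⟩⟩ a s t = 0 :=
      single_apply_of_ne _ _ _ _ _ fun ⟨hs, ht⟩ => hst (by subst hs ht; exact ⟨hl, rfl⟩)
    rw [hJ, hE]
    simp

theorem exists_hasJordanType_add_eq_single (hn : Fintype.card n = ∑ l, nu l) {l : ι}
    (hl : 2 ≤ nu l) {i₀ i₁ : n} (hi : i₀ ≠ i₁) {a : k} (ha : a ≠ 1) :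
    ∃ X Y : Matrix n n k, HasJordanType nu X ∧ HasJordanType nu Y ∧ X + Y = single i₀ i₁ a := by
  classical
  let s₀ : Σ l, Fin (nu l) := ⟨l, ⟨0, one_pos.trans hl⟩⟩
  let s₁ : Σ l, Fin (nu l) := ⟨l, ⟨1, hl⟩⟩
  have hs : s₀ ≠ s₁ := by simp [s₀, s₁]
  let e₁ : (Σ l, Fin (nu l)) ≃ n := Fintype.equivOfCardEq (by simp [hn])
  obtain ⟨g, hg₀, hg₁⟩ := MulAction.is_two_pretransitive_iff.1
    (Equiv.Perm.isMultiplyPretransitive n 2) (e₁.injective.ne hs) hi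
  let e := e₁.trans g
  have hX := hasJordanType_jordanShift (k := k) (nu := nu)
  refine ⟨_, _, hX.reindex e, (hX.of_isConj (isConj_jordanShift_single_sub hl ha)).reindex e, ?_⟩
  calc reindex e e (jordanShift k nu) + reindex e e (single s₀ s₁ a - jordanShift k nu)
      = reindex e e (single s₀ s₁ a) := by
        rw [← coe_reindexLinearEquiv k k, ← map_add, add_sub_cancel]
    _ = single i₀ i₁ a := by
        rw [← hg₀, ← hg₁]
        ext i t
        simp [e, s₀, s₁, single_apply, Equiv.eq_symm_apply, Equiv.Perm.smul_def]

theorem isConj_single_vecMulVec {w : n → k} {i₀ i₁ : n} (hw₀ : w i₀ ≠ 0) (hw₁ : w i₁ = 0) {a : k}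
    (ha : a ≠ 0) : IsConj (single i₀ i₁ a) (vecMulVec w (Pi.single i₁ 1)) := by
  have hi : i₁ ≠ i₀ := by rintro rfl; exact hw₀ hw₁
  let g : Matrix n n k := updateCol 1 i₀ (a⁻¹ • w)
  have hg : IsUnit g := by
    rw [isUnit_iff_isUnit_det, isUnit_iff_ne_zero]
    rw [← cramer_apply, map_smul, cramer_one]
    simp [ha, hw₀]
  refine ⟨hg.unit, ?_⟩
  rw [SemiconjBy, IsUnit.unit_spec]
  have h₁ : g *ᵥ Pi.single i₀ a = w := by
    ext s
    simp [g, mul_right_comm, ha]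
  have h₂ : Pi.single i₁ 1 ᵥ* g = Pi.single i₁ 1 := by
    ext s
    obtain rfl | hs := eq_or_ne s i₀
    · simp [g, hw₁, hi]
    · simp [g, hs, one_apply, Pi.single_apply, eq_comm]
  have h₃ : single i₀ i₁ a = vecMulVec (Pi.single i₀ a) (Pi.single i₁ 1) := by
    rw [← mul_one a, ← smul_eq_mul, ← smul_single, single_eq_single_vecMulVec_single,
      ← smul_vecMulVec, ← Pi.single_smul]
  rw [h₃, mul_vecMulVec, h₁, vecMulVec_mul, h₂]

theorem exists_isConj_fromBlocks_zero (A : Matrix n n k) {C X Y : Matrix n n k}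
    (h : IsConj (X + Y) C) :
    ∃ E, IsConj (fromBlocks X E 1 Y) (fromBlocks 0 A 1 C) := by
  obtain ⟨g, hg⟩ := h
  let P : Matrix (n ⊕ n) (n ⊕ n) k := fromBlocks g (-(g * X)) 0 g
  have hP : IsUnit P := isUnit_fromBlocks_zero₂₁.2 ⟨g.isUnit, g.isUnit⟩
  refine ⟨g⁻¹ * (A * g) + X * Y, hP.unit, ?_⟩
  have hg' : C * g = g * X + g * Y := by rw [← hg.eq, Matrix.mul_add]
  simp only [SemiconjBy, IsUnit.unit_spec, P, fromBlocks_multiply]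
  simp [Matrix.mul_add, Matrix.mul_assoc, hg']

variable {N p : ℕ} {lam : Fin p → ℕ}

theorem mul_mem_image2_jordanOrbit_of_mul_eq_fromBlocks {U : Matrix (Fin N) (n ⊕ n) k}
    {V : Matrix (n ⊕ n) (Fin N) k} {X Y E F : Matrix n n k}
    (hX : HasJordanType (fun l => lam l - 1) X) (hY : HasJordanType (fun l => lam l - 1) Y)
    (hVU : IsUnit (V * U)) (h : V * U = fromBlocks X E F Y) :
    U * V ∈ Set.image2 (· + ·) (jordanOrbit k N lam) (jordanOrbit k N lam) := by
  obtain ⟨W, hW₁, hW₂⟩ := isUnit_iff_exists.1 hVU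
  obtain ⟨L, hL⟩ : ∃ L : Matrix (n ⊕ n) (Fin N) k, L * U = 1 :=
    ⟨W * V, by rwa [Matrix.mul_assoc]⟩
  obtain ⟨R, hR⟩ : ∃ R : Matrix (Fin N) (n ⊕ n) k, V * R = 1 :=
    ⟨U * W, by rwa [← Matrix.mul_assoc]⟩
  rw [← fromCols_toCols U, ← fromRows_toRows V] at h ⊢
  rw [← fromCols_toCols U, ← fromRows_toRows L, fromRows_mul_fromCols, ← fromBlocks_one,
    fromBlocks_inj] at hL
  rw [← fromRows_toRows V, ← fromCols_toCols R, fromRows_mul_fromCols, ← fromBlocks_one,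
    fromBlocks_inj] at hR
  rw [fromRows_mul_fromCols, fromBlocks_inj] at h
  rw [fromCols_mul_fromRows]
  exact Set.mem_image2_of_mem (mul_mem_jordanOrbit hL.1 hR.1 (h.1 ▸ hX))
    (mul_mem_jordanOrbit hL.2.2.2 hR.2.2.2 (h.2.2.2 ▸ hY))

theorem mul_mem_image2_jordanOrbit_of_isConj_fromBlocks {U : Matrix (Fin N) (n ⊕ n) k}
    {V : Matrix (n ⊕ n) (Fin N) k} {X Y E F : Matrix n n k}
    (hX : HasJordanType (fun l => lam l - 1) X) (hY : HasJordanType (fun l => lam l - 1) Y)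
    (hVU : IsUnit (V * U)) (h : IsConj (fromBlocks X E F Y) (V * U)) :
    U * V ∈ Set.image2 (· + ·) (jordanOrbit k N lam) (jordanOrbit k N lam) := by
  obtain ⟨P, hP⟩ := h
  have hmul : (U * P.val) * (P⁻¹.val * V) = U * V := by
    rw [Matrix.mul_assoc, ← Matrix.mul_assoc P.val, P.mul_inv, Matrix.one_mul]
  have hconj : (P⁻¹.val * V) * (U * P.val) = P⁻¹.val * (V * U) * P.val := by
    simp only [Matrix.mul_assoc]
  rw [← hmul]
  refine mul_mem_image2_jordanOrbit_of_mul_eq_fromBlocks hX hY ?_ (E := E) (F := F) ?_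
  · exact hconj ▸ (P⁻¹.isUnit.mul hVU).mul P.isUnit
  · rw [hconj, Matrix.mul_assoc, ← hP.eq, ← Matrix.mul_assoc, P.inv_mul, Matrix.one_mul]

end SumOfTwoNilpotents

/-- The matrix with columns `W ^ (2 * i) v` (left block) and `W ^ (2 * i + 1) v` (right block),
where `v` is the basis vector at `Sum.inl 0`. Listing the even powers first makes `W` a block matrix
with lower left block `1` in this basis. -/
def evenOddKrylov {R : Type*} [CommRing R] {d : ℕ}
    (W : Matrix (Fin (d + 1) ⊕ Fin (d + 1)) (Fin (d + 1) ⊕ Fin (d + 1)) R) :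
    Matrix (Fin (d + 1) ⊕ Fin (d + 1)) (Fin (d + 1) ⊕ Fin (d + 1)) R :=
  fromCols (of fun s i => (W ^ (2 * (i : ℕ))) s (Sum.inl 0))
    (of fun s i => (W ^ (2 * (i : ℕ) + 1)) s (Sum.inl 0))

/-- The matrix sending `Sum.inl i` to `Sum.inr i`, `Sum.inr i` to `Sum.inl (i + 1)` and the last
basis vector to `Sum.elim c₀ c₁`: up to the order of the basis, the companion matrix of a polynomial
of degree `2 * (d + 1)`. It is the normal form of a matrix in the basis `evenOddKrylov`. -/
def evenOddCompanion {R : Type*} [CommRing R] {d : ℕ} (c₀ c₁ : Fin (d + 1) → R) :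
    Matrix (Fin (d + 1) ⊕ Fin (d + 1)) (Fin (d + 1) ⊕ Fin (d + 1)) R :=
  fromBlocks 0 (of (Fin.snoc (fun i : Fin d => Pi.single i.succ 1) c₀))ᵀ
    1 (vecMulVec c₁ (Pi.single (Fin.last d) 1))

/-- The genericity condition on `W`: a polynomial in its entries, nonzero over a field exactly when
`W` is invertible, `Sum.inl 0` is a cyclic vector, and in the resulting Krylov basis the coefficient
at `Sum.inr 0` of the last column of `W` is nonzero. -/
def krylovDiscriminant {R : Type*} [CommRing R] {d : ℕ}
    (W : Matrix (Fin (d + 1) ⊕ Fin (d + 1)) (Fin (d + 1) ⊕ Fin (d + 1)) R) : R :=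
  W.det * (evenOddKrylov W).det *
    ((evenOddKrylov W).adjugate * (W * evenOddKrylov W)) (Sum.inr 0) (Sum.inr (Fin.last d))

section Krylov

variable {R : Type*} [CommRing R] {d : ℕ} {c₀ c₁ : Fin (d + 1) → R}
  {W : Matrix (Fin (d + 1) ⊕ Fin (d + 1)) (Fin (d + 1) ⊕ Fin (d + 1)) R}

theorem trace_evenOddCompanion : (evenOddCompanion c₀ c₁).trace = c₁ (Fin.last d) := by
  simp [evenOddCompanion, trace, vecMulVec_apply, Pi.single_apply]

theorem evenOddCompanion_mulVec_single_inl (i : Fin (d + 1)) :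
    evenOddCompanion c₀ c₁ *ᵥ Pi.single (Sum.inl i) 1 = Pi.single (Sum.inr i) 1 := by
  ext (s | s) <;> simp [evenOddCompanion, one_apply, Pi.single_apply]

theorem evenOddCompanion_mulVec_single_inr_castSucc (i : Fin d) :
    evenOddCompanion c₀ c₁ *ᵥ Pi.single (Sum.inr i.castSucc) 1 = Pi.single (Sum.inl i.succ) 1 := by
  ext (s | s) <;> simp [evenOddCompanion, vecMulVec_apply, Pi.single_apply]

theorem evenOddKrylov_evenOddCompanion : evenOddKrylov (evenOddCompanion c₀ c₁) = 1 := by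
  set D := evenOddCompanion c₀ c₁
  have hinl : ∀ i : Fin (d + 1),
      D ^ (2 * (i : ℕ)) *ᵥ Pi.single (Sum.inl 0) 1 = Pi.single (Sum.inl i) 1 := by
    intro i
    induction i using Fin.induction with
    | zero => rw [Fin.val_zero, mul_zero, pow_zero, one_mulVec]
    | succ i ih =>
      rw [Fin.val_castSucc] at ih
      rw [Fin.val_succ, mul_add_one, add_comm _ 2, pow_add, ← mulVec_mulVec, ih, sq,
        ← mulVec_mulVec, evenOddCompanion_mulVec_single_inl,
        evenOddCompanion_mulVec_single_inr_castSucc]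
  have hinr : ∀ i : Fin (d + 1),
      D ^ (2 * (i : ℕ) + 1) *ᵥ Pi.single (Sum.inl 0) 1 = Pi.single (Sum.inr i) 1 := by
    intro i
    rw [pow_succ', ← mulVec_mulVec, hinl, evenOddCompanion_mulVec_single_inl]
  ext s (i | i)
  · simpa [evenOddKrylov, one_apply, Pi.single_apply] using congrFun (hinl i) s
  · simpa [evenOddKrylov, one_apply, Pi.single_apply] using congrFun (hinr i) s

theorem isUnit_det_evenOddCompanion_single_zero :
    IsUnit (evenOddCompanion (Pi.single 0 1) c₁).det := by
  set A : Matrix (Fin (d + 1)) (Fin (d + 1)) R :=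
    of (Fin.snoc (fun i : Fin d => Pi.single i.succ 1) (Pi.single 0 1)) with hA
  have hperm : A = (1 : Matrix _ _ R).submatrix (finRotate (d + 1)) id := by
    ext i t
    induction i using Fin.lastCases <;> simp [A, one_apply, Pi.single_apply, eq_comm]
  have hdet : IsUnit A.det := by
    rw [hperm, det_permute, det_one, mul_one]
    exact (Equiv.Perm.sign _).isUnit.map (Int.castRingHom R)
  have hswap : evenOddCompanion (Pi.single 0 1) c₁ * fromBlocks 0 1 1 0
      = fromBlocks Aᵀ 0 (vecMulVec c₁ (Pi.single (Fin.last d) 1)) 1 := by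
    simp [evenOddCompanion, fromBlocks_multiply, ← hA]
  have hdet_swap := congrArg det hswap
  rw [det_mul, det_fromBlocks_zero₁₂, det_one, mul_one, det_transpose] at hdet_swap
  exact isUnit_of_mul_isUnit_left (hdet_swap ▸ hdet)

theorem exists_trace_eq_zero_krylovDiscriminant_ne_zero (R : Type*) [CommRing R] [Nontrivial R]
    (hd : d ≠ 0) : ∃ D : Matrix (Fin (d + 1) ⊕ Fin (d + 1)) (Fin (d + 1) ⊕ Fin (d + 1)) R,
      D.trace = 0 ∧ krylovDiscriminant D ≠ 0 := by
  refine ⟨evenOddCompanion (Pi.single 0 1) (Pi.single 0 1), ?_, ?_⟩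
  · rw [trace_evenOddCompanion, Pi.single_eq_of_ne (by simpa [Fin.ext_iff] using hd)]
  · have hcoeff : evenOddCompanion (R := R) (Pi.single 0 1) (Pi.single 0 1)
        (Sum.inr 0) (Sum.inr (Fin.last d)) = 1 := by
      simp [evenOddCompanion, vecMulVec_apply]
    simpa [krylovDiscriminant, evenOddKrylov_evenOddCompanion, hcoeff] using
      isUnit_det_evenOddCompanion_single_zero.ne_zero

theorem evenOddKrylov_map {R' : Type*} [CommRing R'] (f : R →+* R') :
    evenOddKrylov (W.map f) = (evenOddKrylov W).map f := by
  have hpow : ∀ i, W.map f ^ i = (W ^ i).map f := fun i => (map_pow f.mapMatrix W i).symm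
  ext s (i | i) <;> simp [evenOddKrylov, hpow]

theorem map_krylovDiscriminant {R' : Type*} [CommRing R'] (f : R →+* R') :
    f (krylovDiscriminant W) = krylovDiscriminant (W.map f) := by
  have hadj := f.map_adjugate (evenOddKrylov W)
  simp only [RingHom.mapMatrix_apply] at hadj
  rw [krylovDiscriminant, krylovDiscriminant, evenOddKrylov_map, ← hadj, ← Matrix.map_mul,
    ← Matrix.map_mul, map_apply, map_mul, map_mul, RingHom.map_det, RingHom.map_det]
  rfl

theorem mul_evenOddKrylov_inl (s) (i : Fin (d + 1)) :
    (W * evenOddKrylov W) s (Sum.inl i) = evenOddKrylov W s (Sum.inr i) := by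
  simp [evenOddKrylov, pow_succ', mul_apply]

theorem mul_evenOddKrylov_inr_castSucc (s) (i : Fin d) :
    (W * evenOddKrylov W) s (Sum.inr i.castSucc) = evenOddKrylov W s (Sum.inl i.succ) := by
  simp [evenOddKrylov, mul_add_one, pow_succ' _ (2 * _ + 1), mul_apply]

theorem exists_inv_evenOddKrylov_mul_eq (h : IsUnit (evenOddKrylov W).det) :
    ∃ c₀ c₁, (evenOddKrylov W)⁻¹ * (W * evenOddKrylov W) = evenOddCompanion c₀ c₁ := by
  set S := evenOddKrylov W
  have hcol : ∀ t t', (∀ s, (W * S) s t = S s t') →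
      ∀ s, (S⁻¹ * (W * S)) s t = (1 : Matrix _ _ R) s t' := by
    intro t t' h' s
    rw [← nonsing_inv_mul _ h, mul_apply, mul_apply]
    simp only [h']
  refine ⟨fun i => (S⁻¹ * (W * S)) (Sum.inl i) (Sum.inr (Fin.last d)),
    fun i => (S⁻¹ * (W * S)) (Sum.inr i) (Sum.inr (Fin.last d)), ?_⟩
  ext s (i | i)
  · rw [hcol _ _ fun s => mul_evenOddKrylov_inl s i]
    rcases s with s | s <;> simp [evenOddCompanion, one_apply]
  · induction i using Fin.lastCases with
    | last => rcases s with s | s <;> simp [evenOddCompanion, vecMulVec_apply]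
    | cast i =>
      rw [hcol _ _ fun s => mul_evenOddKrylov_inr_castSucc s i]
      rcases s with s | s <;> simp [evenOddCompanion, one_apply, vecMulVec_apply, Pi.single_apply]

end Krylov

section SecantVariety

variable {k ι : Type*} [Field k] [Infinite k] [Fintype ι] {d : ℕ}

theorem exists_isConj_fromBlocks_of_krylovDiscriminant_ne_zero {nu : ι → ℕ}
    (hnu : ∑ l, nu l = d + 1) {l : ι} (hl : 2 ≤ nu l)
    {W : Matrix (Fin (d + 1) ⊕ Fin (d + 1)) (Fin (d + 1) ⊕ Fin (d + 1)) k}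
    (htr : W.trace = 0) (hW : krylovDiscriminant W ≠ 0) :
    ∃ X E Y, HasJordanType nu X ∧ HasJordanType nu Y ∧ IsConj (fromBlocks X E 1 Y) W := by
  classical
  have hS := right_ne_zero_of_mul (left_ne_zero_of_mul hW)
  have hcoeff := right_ne_zero_of_mul hW
  set S := evenOddKrylov W
  have hSu : IsUnit S.det := isUnit_iff_ne_zero.2 hS
  obtain ⟨c₀, c₁, hc⟩ := exists_inv_evenOddKrylov_mul_eq hSu
  have hconj : IsConj (evenOddCompanion c₀ c₁) W :=
    ⟨((isUnit_iff_isUnit_det S).2 hSu).unit, hc ▸ mul_nonsing_inv_cancel_left S _ hSu⟩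
  have hc_zero : c₁ 0 ≠ 0 := by
    intro h
    have hentry := congrFun (congrFun hc (Sum.inr 0)) (Sum.inr (Fin.last d))
    rw [inv_def, Matrix.smul_mul, Matrix.smul_apply, Ring.inverse_eq_inv', smul_eq_mul] at hentry
    refine mul_ne_zero (inv_ne_zero hS) hcoeff (hentry.trans ?_)
    simp [evenOddCompanion, vecMulVec_apply, h]
  have hc_last : c₁ (Fin.last d) = 0 := by
    rw [← trace_evenOddCompanion (c₀ := c₀) (c₁ := c₁), ← hc, trace_mul_comm,
      mul_nonsing_inv_cancel_right _ _ hSu, htr]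
  obtain ⟨a, ha⟩ := Infinite.exists_notMem_finset ({0, 1} : Finset k)
  rw [Finset.mem_insert, Finset.mem_singleton, not_or] at ha
  obtain ⟨X, Y, hX, hY, hXY⟩ := exists_hasJordanType_add_eq_single
    ((Fintype.card_fin _).trans hnu.symm) hl (ne_of_apply_ne c₁ (hc_last ▸ hc_zero)) ha.2
  obtain ⟨E, hE⟩ := exists_isConj_fromBlocks_zero _
    (hXY ▸ isConj_single_vecMulVec hc_zero hc_last ha.1)
  exact ⟨X, E, Y, hX, hY, hE.trans hconj⟩

variable {N p : ℕ} {lam : Fin p → ℕ}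

theorem mul_mem_image2_jordanOrbit_of_krylovDiscriminant_ne_zero
    (hlam : ∑ l, (lam l - 1) = d + 1) {l : Fin p} (hl : 3 ≤ lam l)
    {U : Matrix (Fin N) (Fin (d + 1) ⊕ Fin (d + 1)) k}
    {V : Matrix (Fin (d + 1) ⊕ Fin (d + 1)) (Fin N) k} (htr : (V * U).trace = 0)
    (hVU : krylovDiscriminant (V * U) ≠ 0) :
    U * V ∈ Set.image2 (· + ·) (jordanOrbit k N lam) (jordanOrbit k N lam) := by
  obtain ⟨X, E, Y, hX, hY, hconj⟩ :=
    exists_isConj_fromBlocks_of_krylovDiscriminant_ne_zero hlam (Nat.le_sub_one_of_lt hl) htr hVU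
  have hunit : IsUnit (V * U) := (isUnit_iff_isUnit_det _).2
    (isUnit_iff_ne_zero.2 (left_ne_zero_of_mul (left_ne_zero_of_mul hVU)))
  exact mul_mem_image2_jordanOrbit_of_isConj_fromBlocks hX hY hunit hconj

open Polynomial in
theorem mul_mem_zClosure_image2_jordanOrbit (hd : d ≠ 0)
    (hlam : ∑ l, (lam l - 1) = d + 1) {l : Fin p} (hl : 3 ≤ lam l)
    {L : Matrix (Fin (d + 1) ⊕ Fin (d + 1)) (Fin N) k}
    {U : Matrix (Fin N) (Fin (d + 1) ⊕ Fin (d + 1)) k}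
    {V : Matrix (Fin (d + 1) ⊕ Fin (d + 1)) (Fin N) k} (hLU : L * U = 1)
    (htr : (U * V).trace = 0) :
    U * V ∈ zClosure (Set.image2 (· + ·) (jordanOrbit k N lam) (jordanOrbit k N lam)) := by
  obtain ⟨D, hDtr, hD⟩ := exists_trace_eq_zero_krylovDiscriminant_ne_zero k hd
  let q := krylovDiscriminant ((V * U).map C + (X : k[X]) • (D - V * U).map C)
  have hq : ∀ t, q.eval t = krylovDiscriminant (V * U + t • (D - V * U)) := by
    intro t
    rw [← coe_evalRingHom, map_krylovDiscriminant, coe_evalRingHom, map_eval_map_C_add_X_smul]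
  have hq_ne : q ≠ 0 := by
    intro h
    have hq_one := hq 1
    rw [h, eval_zero, one_smul, add_sub_cancel] at hq_one
    exact hD hq_one.symm
  have hUV : ((U * V).map C + (X : k[X]) • (U * (D * L - V)).map C).map (eval 0) = U * V := by
    rw [map_eval_map_C_add_X_smul, zero_smul, add_zero]
  rw [← hUV]
  refine map_eval_mem_zClosure hq_ne (fun t ht => ?_) 0
  have hVU : (V + t • (D * L - V)) * U = V * U + t • (D - V * U) := by
    rw [Matrix.add_mul, Matrix.smul_mul, Matrix.sub_mul, Matrix.mul_assoc D, hLU, Matrix.mul_one]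
  rw [map_eval_map_C_add_X_smul, ← Matrix.mul_smul, ← Matrix.mul_add]
  refine mul_mem_image2_jordanOrbit_of_krylovDiscriminant_ne_zero hlam hl ?_ ?_
  · rw [hVU, trace_add, trace_smul, trace_sub, hDtr, trace_mul_comm, htr, sub_zero, smul_zero,
      add_zero]
  · rw [hVU, ← hq]
    exact ht

theorem stmt1_general {j : ℕ} (hpos : ∀ l, 1 ≤ lam l) (hsum : ∑ l, lam l = N) {l₀ : Fin p}
    (hl₀ : 3 ≤ lam l₀) (hj : j = N - p) (hjN : 2 * j ≤ N) :
    zClosure (Set.image2 (· + ·) (jordanOrbit k N lam) (jordanOrbit k N lam))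
      = {M : Matrix (Fin N) (Fin N) k | Matrix.trace M = 0 ∧ M.rank ≤ 2 * j} := by
  have hlam : ∑ l, (lam l - 1) = j := by
    rw [Finset.sum_tsub_distrib _ fun l _ => hpos l, hsum, hj]
    simp
  ext M
  refine ⟨fun hM => ⟨trace_eq_zero_of_mem_zClosure ?_ hM, rank_le_of_mem_zClosure ?_ hM⟩, ?_⟩
  · rintro _ ⟨x, hx, y, hy, rfl⟩
    simp only [trace_add, trace_eq_zero_of_mem_jordanOrbit hx, trace_eq_zero_of_mem_jordanOrbit hy,
      add_zero]
  · rintro _ ⟨x, hx, y, hy, rfl⟩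
    have hrank : ∀ z ∈ jordanOrbit k N lam, z.rank = j := fun z hz => by
      rw [← hlam, ← hz 1 le_rfl, pow_one]
    have := rank_add_le_rank_add_rank x y
    rwa [hrank x hx, hrank y hy, ← two_mul] at this
  · rintro ⟨htr, hrank⟩
    have hj2 : 2 ≤ j := hlam ▸ (Nat.le_sub_one_of_lt hl₀).trans
      (Finset.single_le_sum_of_canonicallyOrdered (f := fun l => lam l - 1) (Finset.mem_univ l₀))
    obtain ⟨d, rfl⟩ := Nat.exists_eq_add_of_le' (one_le_two.trans hj2)
    obtain ⟨L, U, V, hLU, rfl⟩ := exists_leftInverse_mul_eq_of_rank_le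
      (m := Fin (d + 1) ⊕ Fin (d + 1)) M
      (by simpa [← two_mul] using hrank) (by simpa [← two_mul] using hjN)
    exact mul_mem_zClosure_image2_jordanOrbit (by omega) hlam hl₀ hLU htr

end SecantVariety

/-- If `λ₁ ≥ 3` and `j = N − p` with `2j < N`, then the conical secant variety of `O_λ`
is the determinantal variety of trace-zero matrices of rank at most `2j`. -/
theorem stmt1 {k : Type*} [Field k] [IsAlgClosed k] [CharZero k]
    {N p j : ℕ} (hN : 5 ≤ N) (hp : 0 < p) (lam : Fin p → ℕ)
    (hanti : Antitone lam) (hpos : ∀ l, 1 ≤ lam l)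
    (hsum : ∑ l, lam l = N)
    (hl1 : 3 ≤ lam ⟨0, hp⟩)
    (hj : j = N - p) (hjN : 2 * j < N) :
    zClosure (Set.image2 (· + ·) (jordanOrbit k N lam) (jordanOrbit k N lam))
      = {M : Matrix (Fin N) (Fin N) k | Matrix.trace M = 0 ∧ M.rank ≤ 2 * j} :=
  stmt1_general hpos hsum hl1 hj hjN.le
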